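/- If T is a tree with ℓ ≥ 1 bijacent vertices, then aw(T,3) ≤ log_2(ℓ) + 4. -/

import Mathlib

namespace AntiVDW

/-- `v 0, v 1, …, v (k-1)` is a `k`-term arithmetic progression in `G`:
consecutive vertices are at a common finite distance `d`. -/
def IsAPSeq {V : Type*} (G : SimpleGraph V) (k : ℕ) (v : ℕ → V) : Prop :=
  ∃ d : ℕ, ∀ i, i + 1 < k → G.Reachable (v i) (v (i + 1)) ∧ G.dist (v i) (v (i + 1)) = d

/-- `G` contains a `k`-AP that is rainbow under the coloring `c`. -/
def HasRainbowAP {V α : Type*} (G : SimpleGraph V) (k : ℕ) (c : V → α) : Prop :=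
  ∃ v : ℕ → V, IsAPSeq G k v ∧ ∀ i j, i < k → j < k → i ≠ j → c (v i) ≠ c (v j)

/-- The anti-van der Waerden number: the least positive `r` such that every
exact (surjective) `r`-coloring of `G` contains a rainbow `k`-AP. -/
noncomputable def aw {V : Type*} (G : SimpleGraph V) (k : ℕ) : ℕ :=
  sInf {r : ℕ | 0 < r ∧ ∀ c : V → Fin r, Function.Surjective c → HasRainbowAP G k c}

/-- Eccentricity of a vertex. -/
noncomputable def ecc {V : Type*} [Fintype V] (G : SimpleGraph V) (v : V) : ℕ :=
  Finset.univ.sup fun u => G.dist v u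

/-- Radius of a graph. -/
noncomputable def rad {V : Type*} [Fintype V] [Nonempty V] (G : SimpleGraph V) : ℕ :=
  Finset.univ.inf' Finset.univ_nonempty (ecc G)

/-- Diameter of a graph. -/
noncomputable def diam {V : Type*} [Fintype V] (G : SimpleGraph V) : ℕ :=
  Finset.univ.sup (ecc G)

/-- A bijacent vertex: a degree-2 vertex whose two neighbors also have degree 2. -/
def Bijacent {V : Type*} [Fintype V] (G : SimpleGraph V) [DecidableRel G.Adj] (v : V) : Prop :=
  G.degree v = 2 ∧ ∀ u ∈ G.neighborFinset v, G.degree u = 2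



section Helpers

variable {V : Type*} {T : SimpleGraph V}

theorem exists_geo_aux (hT : T.IsTree) (x y : V) :
    ∃ w : T.Walk x y, w.IsPath ∧ w.length = T.dist x y :=
  hT.connected.exists_path_of_dist x y

/-- A vertex metrically between `p` and `q` lies on every path from `p` to `q`. -/
theorem mem_support_of_btw (hT : T.IsTree) {p x q : V}
    (h : T.dist p x + T.dist x q = T.dist p q) (w : T.Walk p q) (hw : w.IsPath) :
    x ∈ w.support := by
  obtain ⟨w3, -, h3⟩ := exists_geo_aux hT p x
  obtain ⟨w4, -, h4⟩ := exists_geo_aux hT x q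
  have hl : (w3.append w4).length = T.dist p q := by
    rw [SimpleGraph.Walk.length_append, h3, h4, h]
  have hp : (w3.append w4).IsPath := SimpleGraph.Walk.isPath_of_length_eq_dist _ hl
  have heq : w = w3.append w4 := by
    have := (hT.isAcyclic.subsingleton_path p q).elim ⟨w, hw⟩ ⟨_, hp⟩
    exact congrArg Subtype.val this
  rw [heq]
  simp [SimpleGraph.Walk.mem_support_append_iff]

theorem btw_of_mem_support {p x y : V} (hT : T.IsTree) (w : T.Walk p y)
    (hl : w.length = T.dist p y) (hx : x ∈ w.support) :
    T.dist p x + T.dist x y = T.dist p y := by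
  classical
  have h1 := SimpleGraph.dist_le (w.takeUntil x hx)
  have h2 := SimpleGraph.dist_le (w.dropUntil x hx)
  have h3 := congrArg SimpleGraph.Walk.length (w.take_spec hx)
  rw [SimpleGraph.Walk.length_append] at h3
  have h4 : T.dist p y ≤ T.dist p x + T.dist x y := hT.connected.dist_triangle
  omega

theorem btw_split (hT : T.IsTree) {p x q : V} (y : V)
    (h : T.dist p x + T.dist x q = T.dist p q) :
    T.dist p x + T.dist x y = T.dist p y ∨ T.dist y x + T.dist x q = T.dist y q := by
  classical
  obtain ⟨w1, -, h1⟩ := exists_geo_aux hT p y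
  obtain ⟨w2, -, h2⟩ := exists_geo_aux hT y q
  have hm := mem_support_of_btw hT h (w1.append w2).bypass (SimpleGraph.Walk.bypass_isPath _)
  have hm2 := SimpleGraph.Walk.support_bypass_subset_support _ hm
  rw [SimpleGraph.Walk.mem_support_append_iff] at hm2
  rcases hm2 with hm2 | hm2
  · exact Or.inl (btw_of_mem_support hT w1 h1 hm2)
  · exact Or.inr (btw_of_mem_support hT w2 h2 hm2)

/-- `p 0, …, p n` is a geodesic. -/
def Geo (T : SimpleGraph V) (p : ℕ → V) (n : ℕ) : Prop :=
  ∀ i j, i ≤ j → j ≤ n → T.dist (p i) (p j) = j - i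

theorem exists_geo (hT : T.IsTree) (x y : V) :
    ∃ p : ℕ → V, Geo T p (T.dist x y) ∧ p 0 = x ∧ p (T.dist x y) = y ∧
      ∀ z, T.dist x z + T.dist z y = T.dist x y → ∃ i ≤ T.dist x y, p i = z := by
  obtain ⟨w, hw, hl⟩ := exists_geo_aux hT x y
  have hy : w.getVert (T.dist x y) = y := by rw [← hl]; exact w.getVert_length
  have up : ∀ i k, i + k ≤ T.dist x y → T.dist (w.getVert i) (w.getVert (i + k)) ≤ k := by
    intro i k
    induction k with
    | zero => intro _; simp
    | succ k ih =>
      intro hk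
      have h1 := ih (by omega)
      have h2 : T.Adj (w.getVert (i + k)) (w.getVert (i + k + 1)) :=
        w.adj_getVert_succ (by omega)
      have h3 := SimpleGraph.dist_eq_one_iff_adj.2 h2
      have h4 : T.dist (w.getVert i) (w.getVert (i + k + 1)) ≤ _ :=
        hT.connected.dist_triangle (v := w.getVert (i + k))
      rw [← add_assoc]
      omega
  refine ⟨w.getVert, ?_, w.getVert_zero, hy, ?_⟩
  · intro i j hij hj
    have a1 := up 0 i (by omega)
    have a2 := up i (j - i) (by omega)
    have a3 := up j (T.dist x y - j) (by omega)
    rw [show i + (j - i) = j by omega] at a2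
    rw [show j + (T.dist x y - j) = T.dist x y by omega, hy] at a3
    rw [zero_add, w.getVert_zero] at a1
    have t1 : T.dist x y ≤ T.dist x (w.getVert i) + T.dist (w.getVert i) y :=
      hT.connected.dist_triangle
    have t2 : T.dist (w.getVert i) y ≤
        T.dist (w.getVert i) (w.getVert j) + T.dist (w.getVert j) y :=
      hT.connected.dist_triangle
    omega
  · intro z hz
    have := mem_support_of_btw hT hz w hw
    obtain ⟨i, hi, hi2⟩ := SimpleGraph.Walk.mem_support_iff_exists_getVert.1 this
    exact ⟨i, by omega, hi⟩

theorem even_dist_of (hT : T.IsTree) (u v w : V) :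
    Even (T.dist u v) ∨ Even (T.dist v w) ∨ Even (T.dist u w) := by
  have key : ∀ a b, Even (T.dist a b) ↔ (hT.coloringTwo a = 0 ↔ hT.coloringTwo b = 0) := by
    intro a b
    obtain ⟨p, -, hp⟩ := exists_geo_aux hT a b
    have e := SimpleGraph.recolorOfEquiv T finTwoEquiv
    have h := SimpleGraph.Coloring.even_length_iff_congr
      (SimpleGraph.recolorOfEquiv T finTwoEquiv hT.coloringTwo) p
    rw [← hp, h]
    change (finTwoEquiv (hT.coloringTwo a) = true ↔ finTwoEquiv (hT.coloringTwo b) = true) ↔ _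
    generalize hT.coloringTwo a = i
    generalize hT.coloringTwo b = j
    revert i j
    decide
  rw [key, key, key]
  tauto

/-- No rainbow 3-APs, unfolded. -/
def NoR {α : Type*} (T : SimpleGraph V) (c : V → α) : Prop :=
  ∀ u v w, T.dist u v = T.dist v w → c u = c v ∨ c v = c w ∨ c u = c w

theorem noR_of {α : Type*} (hT : T.IsTree) (c : V → α) (h : ¬ HasRainbowAP T 3 c) : NoR T c := by
  intro u v w hd
  by_contra hcon
  push Not at hcon
  obtain ⟨h1, h2, h3⟩ := hcon
  apply h
  refine ⟨fun i => if i = 0 then u else if i = 1 then v else w, ⟨T.dist u v, ?_⟩, ?_⟩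
  · intro i hi
    refine ⟨hT.connected _ _, ?_⟩
    have : i = 0 ∨ i = 1 := by omega
    rcases this with rfl | rfl
    · simp
    · simp [hd]
  · intro i j hi hj hij
    interval_cases i <;> interval_cases j <;> simp_all [eq_comm]

/-- Some geodesic sees every colour. -/
theorem exists_rainbow_path {α : Type*} [Fintype V] (hT : T.IsTree) (c : V → α)
    (hc : NoR T c) : ∃ (p : ℕ → V) (n : ℕ), Geo T p n ∧ ∀ v, ∃ i ≤ n, c (p i) = c v := by
  classical
  let Good : Finset V → Prop := fun S =>
    (∀ u ∈ S, ∀ v ∈ S, ∀ w, T.dist u w + T.dist w v = T.dist u v → w ∈ S) ∧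
      ∀ v, ∃ s ∈ S, c s = c v
  have hex : ∃ k, ∃ S, Good S ∧ S.card = k :=
    ⟨_, Finset.univ, ⟨fun _ _ _ _ _ _ => Finset.mem_univ _, fun v => ⟨v, Finset.mem_univ _, rfl⟩⟩,
      rfl⟩
  obtain ⟨S, ⟨hconv, hcol⟩, hS⟩ := Nat.find_spec hex
  have hmin : ∀ S', Good S' → S.card ≤ S'.card := by
    intro S' hS'
    rw [hS]
    exact Nat.find_min' hex ⟨S', hS', rfl⟩
  have hne : S.Nonempty := by
    obtain ⟨v⟩ := hT.connected.nonempty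
    obtain ⟨s, hs, -⟩ := hcol v
    exact ⟨s, hs⟩
  -- extreme points have a unique colour
  have huniq : ∀ z ∈ S, (∀ u ∈ S, ∀ v ∈ S, T.dist u z + T.dist z v = T.dist u v → u = z ∨ v = z) →
      ∀ s ∈ S, c s = c z → s = z := by
    intro z hz hext s hs hsc
    by_contra hsz
    have hg : Good (S.erase z) := by
      refine ⟨?_, ?_⟩
      · intro u hu v hv w hw
        rw [Finset.mem_erase] at hu hv ⊢
        refine ⟨?_, hconv u hu.2 v hv.2 w hw⟩
        rintro rfl
        rcases hext u hu.2 v hv.2 hw with h | h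
        · exact hu.1 h
        · exact hv.1 h
      · intro v
        obtain ⟨t, ht, htc⟩ := hcol v
        by_cases htz : t = z
        · subst htz
          exact ⟨s, Finset.mem_erase.2 ⟨hsz, hs⟩, hsc.trans htc⟩
        · exact ⟨t, Finset.mem_erase.2 ⟨htz, ht⟩, htc⟩
    have h1 := hmin _ hg
    have h2 := Finset.card_erase_lt_of_mem hz
    omega
  have hodd : ∀ u ∈ S, ∀ v ∈ S, u ≠ v → (∀ s ∈ S, c s = c u → s = u) →
      (∀ s ∈ S, c s = c v → s = v) → ¬ Even (T.dist u v) := by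
    intro u hu v hv huv h1 h2 ⟨h, hh⟩
    obtain ⟨p, hp, p0, pn, -⟩ := exists_geo hT u v
    have d1 := hp 0 h (by omega) (by omega)
    have d2 := hp h (T.dist u v) (by omega) (by omega)
    rw [p0] at d1
    rw [pn] at d2
    have hm : p h ∈ S := hconv u hu v hv _ (by omega)
    have hpos : T.dist u v ≠ 0 := by
      rw [Ne, hT.connected.dist_eq_zero_iff]; exact huv
    rcases hc u (p h) v (by omega) with h3 | h3 | h3
    · have := h1 _ hm h3.symm
      rw [this, SimpleGraph.dist_self] at d1
      omega
    · have := h2 _ hm h3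
      rw [this, SimpleGraph.dist_self] at d2
      omega
    · exact huv (h2 _ hu h3)
  obtain ⟨⟨x, y⟩, hxy, hmax⟩ := Finset.exists_max_image (S ×ˢ S) (fun q => T.dist q.1 q.2)
    (hne.product hne)
  rw [Finset.mem_product] at hxy
  obtain ⟨hx, hy⟩ := hxy
  simp only at hx hy
  have hmax' : ∀ u ∈ S, ∀ v ∈ S, T.dist u v ≤ T.dist x y := fun u hu v hv =>
    hmax (u, v) (Finset.mem_product.2 ⟨hu, hv⟩)
  have hpos : ∀ u v, u ≠ v → 0 < T.dist u v := fun u v h => hT.connected.pos_dist_of_ne h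
  have hextx : ∀ u ∈ S, ∀ v ∈ S, T.dist u x + T.dist x v = T.dist u v → u = x ∨ v = x := by
    intro u hu v hv h
    by_contra hcon
    push Not at hcon
    have a1 := hpos _ _ hcon.1
    have a2 := hpos _ _ hcon.2
    have b1 := hmax' u hu y hy
    have b2 := hmax' v hv y hy
    have e1 := T.dist_comm (u := v) (v := y)
    have e2 := T.dist_comm (u := v) (v := x)
    have e3 := T.dist_comm (u := x) (v := y)
    rcases btw_split hT y h with h3 | h3 <;> omega
  have hexty : ∀ u ∈ S, ∀ v ∈ S, T.dist u y + T.dist y v = T.dist u v → u = y ∨ v = y := by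
    intro u hu v hv h
    by_contra hcon
    push Not at hcon
    have a1 := hpos _ _ hcon.1
    have a2 := hpos _ _ hcon.2
    have b1 := hmax' u hu x hx
    have b2 := hmax' x hx v hv
    have e1 := T.dist_comm (u := v) (v := y)
    have e3 := T.dist_comm (u := x) (v := y)
    rcases btw_split hT x h with h3 | h3 <;> omega
  have hall : ∀ z ∈ S, T.dist x z + T.dist z y = T.dist x y := by
    by_contra hcon
    push Not at hcon
    obtain ⟨z0, hz0, hz0n⟩ := hcon
    obtain ⟨z, hz, hzmax⟩ := Finset.exists_max_image S (fun z => T.dist x z + T.dist z y) hne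
    have ht : T.dist x y ≤ T.dist x z0 + T.dist z0 y := hT.connected.dist_triangle
    have hzz := hzmax z0 hz0
    have hzn : T.dist x z + T.dist z y ≠ T.dist x y := by omega
    have hextz : ∀ u ∈ S, ∀ v ∈ S, T.dist u z + T.dist z v = T.dist u v → u = z ∨ v = z := by
      intro u hu v hv h
      by_contra hcon
      push Not at hcon
      have a1 := hpos _ _ hcon.1
      have a2 := hpos _ _ hcon.2
      have m1 := hzmax u hu
      have m2 := hzmax v hv
      have e1 := T.dist_comm (u := v) (v := z)
      have e2 := T.dist_comm (u := v) (v := y)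
      have e3 := T.dist_comm (u := x) (v := z)
      have e4 := T.dist_comm (u := x) (v := u)
      have e5 := T.dist_comm (u := y) (v := z)
      have e6 := T.dist_comm (u := x) (v := y)
      rcases btw_split hT x h with h3 | h3
      · rcases btw_split hT y h3 with h4 | h4 <;> omega
      · rcases btw_split hT y h3 with h4 | h4 <;> omega
    have hzx : z ≠ x := by rintro rfl; simp at hzn
    have hzy : z ≠ y := by rintro rfl; simp at hzn
    have ux := huniq x hx hextx
    have uy := huniq y hy hexty
    have uz := huniq z hz hextz
    have hxy : x ≠ y := by
      rintro rfl
      have h1 := hmax' x hx z hz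
      have h2 := hpos x z hzx.symm
      rw [SimpleGraph.dist_self] at h1
      omega
    rcases even_dist_of hT x y z with h | h | h
    · exact hodd x hx y hy hxy ux uy h
    · exact hodd y hy z hz hzy.symm uy uz h
    · exact hodd x hx z hz hzx.symm ux uz h
  obtain ⟨p, hp, -, -, hpb⟩ := exists_geo hT x y
  refine ⟨p, _, hp, ?_⟩
  intro v
  obtain ⟨s, hs, hsc⟩ := hcol v
  obtain ⟨i, hi, hi2⟩ := hpb s (hall s hs)
  exact ⟨i, hi, by rw [hi2, hsc]⟩

theorem Geo.dist' {p : ℕ → V} {n : ℕ} (hg : Geo T p n) {i j : ℕ} (hi : i ≤ n) (hj : j ≤ n) :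
    T.dist (p i) (p j) = (i - j) + (j - i) := by
  rcases le_total i j with h | h
  · rw [hg i j h hj]; omega
  · rw [SimpleGraph.dist_comm, hg j i h hi]; omega

theorem pendant_dist (hT : T.IsTree) {p : ℕ → V} {n i : ℕ} (hg : Geo T p n) (hi0 : 0 < i)
    (hin : i < n) {q : V} (hq : T.Adj (p i) q) (h1 : q ≠ p (i - 1)) (h2 : q ≠ p (i + 1))
    {j : ℕ} (hj : j ≤ n) : T.dist q (p j) = (i - j) + (j - i) + 1 := by
  have hq1 : T.dist q (p i) = 1 := SimpleGraph.dist_eq_one_iff_adj.2 hq.symm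
  have two : ∀ m, m ≤ n → T.dist (p i) (p m) = 1 → q ≠ p m →
      T.dist q (p i) + T.dist (p i) (p m) = T.dist q (p m) := by
    intro m hm hd hne
    have t : T.dist q (p m) ≤ _ := hT.connected.dist_triangle (v := p i)
    have hpos : 0 < T.dist q (p m) := hT.connected.pos_dist_of_ne hne
    have hn := hT.dist_ne_of_adj q (SimpleGraph.dist_eq_one_iff_adj.1 hd)
    omega
  have fin : ∀ m, m ≤ n → T.dist (p i) (p m) = 1 → q ≠ p m →
      T.dist (p j) (p i) + 1 ≠ T.dist (p j) (p m) → T.dist q (p j) = (i - j) + (j - i) + 1 := by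
    intro m hm hd hne hnot
    have := hg.dist' (i := i) (j := j) (by omega) hj
    rcases btw_split hT (p j) (two m hm hd hne) with h | h <;> omega
  have dij := hg.dist' (i := j) (j := i) hj (by omega)
  by_cases hjeq : j = i
  · rw [hjeq, hq1]; omega
  rcases le_total j (i - 1) with hji | hji
  · apply fin (i - 1) (by omega) (by rw [hg.dist' (by omega) (by omega)]; omega) h1
    rw [dij, hg.dist' hj (by omega)]
    omega
  · rcases Nat.lt_or_ge i j with hlt | hge
    · apply fin (i + 1) (by omega) (by rw [hg.dist' (by omega) (by omega)]; omega) h2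
      rw [dij, hg.dist' hj (by omega)]
      omega
    · apply fin (i - 1) (by omega) (by rw [hg.dist' (by omega) (by omega)]; omega) h1
      rw [dij, hg.dist' hj (by omega)]
      omega

theorem Geo.adj {p : ℕ → V} {n : ℕ} (hg : Geo T p n) {i j : ℕ} (hi : i ≤ n) (hj : j ≤ n)
    (h : i + 1 = j ∨ j + 1 = i) : T.Adj (p i) (p j) := by
  rw [← SimpleGraph.dist_eq_one_iff_adj, hg.dist' hi hj]
  omega

theorem Geo.ne {p : ℕ → V} {n : ℕ} (hg : Geo T p n) {i j : ℕ} (hi : i ≤ n) (hj : j ≤ n)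
    (h : i ≠ j) : p i ≠ p j := by
  intro he
  have := hg.dist' hi hj
  rw [he, SimpleGraph.dist_self] at this
  omega

theorem deg_two [Fintype V] [DecidableRel T.Adj] {p : ℕ → V} {n i : ℕ} (hg : Geo T p n)
    (hi0 : 0 < i) (hin : i < n)
    (h : ∀ q, T.Adj (p i) q → q ≠ p (i - 1) → q ≠ p (i + 1) → False) :
    T.degree (p i) = 2 := by
  classical
  have : T.neighborFinset (p i) = {p (i - 1), p (i + 1)} := by
    ext q
    simp only [SimpleGraph.mem_neighborFinset, Finset.mem_insert, Finset.mem_singleton]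
    constructor
    · intro hq
      by_contra hcon
      push Not at hcon
      exact h q hq hcon.1 hcon.2
    · rintro (rfl | rfl)
      · exact hg.adj (by omega) (by omega) (by omega)
      · exact hg.adj (by omega) (by omega) (by omega)
  rw [← SimpleGraph.card_neighborFinset_eq_degree, this]
  exact Finset.card_pair (hg.ne (by omega) (by omega) (by omega))

theorem Geo.ap {α : Type*} {c : V → α} (hc : NoR T c) {p : ℕ → V} {n : ℕ} (hg : Geo T p n)
    {i j k : ℕ} (hij : i + k = 2 * j) (hk : k ≤ n) (hi : i ≤ n) :
    c (p i) = c (p j) ∨ c (p j) = c (p k) ∨ c (p i) = c (p k) := by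
  apply hc
  rw [hg.dist' (by omega) (by omega), hg.dist' (by omega) (by omega)]
  omega

theorem base_bij {α : Type*} [Fintype V] [DecidableRel T.Adj] (hT : T.IsTree) {c : V → α}
    (hc : NoR T c) {p : ℕ → V} {n a : ℕ} (hg : Geo T p n)
    (hA : ∀ i, 0 < i → i ≤ n → c (p i) ≠ c (p 0)) (hD : ∀ i, i < n → c (p i) ≠ c (p n))
    (h2 : n < 2 * a) (h3 : a + 2 ≤ n) (hC : ∀ i, a < i → i ≤ n → c (p i) ≠ c (p a))
    (B : α) (hB : ∀ i, a < i → i < n → c (p i) = B) : Bijacent T (p a) := by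
  have dbl : ∀ t s, s = 2 * t → 0 < t → s ≤ n → c (p t) = c (p s) := by
    intro t s hs ht hsn
    rcases hg.ap hc (i := 0) (j := t) (k := s) (by omega) (by omega) (by omega) with h | h | h
    · exact absurd h.symm (hA t ht (by omega))
    · exact h
    · exact absurd h.symm (hA s (by omega) hsn)
  have dblr : ∀ i j, i + n = 2 * j → j < n → c (p i) = c (p j) := by
    intro i j hij hj
    rcases hg.ap hc (i := i) (j := j) (k := n) (by omega) (by omega) (by omega) with h | h | h
    · exact h
    · exact absurd h (hD j hj)
    · exact absurd h (hD i (by omega))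
  have hodd : n % 2 = 1 := by
    by_contra hcon
    exact hD (n / 2) (by omega) (dbl (n / 2) n (by omega) (by omega) le_rfl)
  have hBC : B ≠ c (p a) := by
    rw [← hB (a + 1) (by omega) (by omega)]
    exact hC _ (by omega) (by omega)
  have hBD : B ≠ c (p n) := by
    rw [← hB (a + 1) (by omega) (by omega)]
    exact hD _ (by omega)
  have hBA : B ≠ c (p 0) := by
    rw [← hB (a + 1) (by omega) (by omega)]
    exact hA _ (by omega) (by omega)
  have hCD : c (p a) ≠ c (p n) := hD a (by omega)
  have hCA : c (p a) ≠ c (p 0) := hA a (by omega) (by omega)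
  have haev : a % 2 = 0 := by
    by_contra hcon
    rcases hg.ap hc (i := a) (j := (a + n) / 2) (k := n) (by omega) (by omega) (by omega) with
      h | h | h
    · exact hC _ (by omega) (by omega) h.symm
    · exact hD _ (by omega) h
    · exact hCD h
  have h3' : a + 3 ≤ n := by omega
  have hCk : c (p (2 * a - n)) = c (p a) := dblr _ _ (by omega) (by omega)
  have hBm : c (p (a - 1)) = B := by
    rw [dblr (a - 1) ((a - 1 + n) / 2) (by omega) (by omega)]
    exact hB _ (by omega) (by omega)
  -- the vertex itself
  have d0 : T.degree (p a) = 2 := by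
    apply deg_two hg (by omega) (by omega)
    intro q hq hq1 hq2
    have hd : ∀ j, j ≤ n → T.dist q (p j) = (a - j) + (j - a) + 1 := fun j hj =>
      pendant_dist hT hg (by omega) (by omega) hq hq1 hq2 hj
    have e1 := hc (p (2 * a - n)) q (p n) (by
      rw [SimpleGraph.dist_comm, hd _ (by omega), hd _ (by omega)]; omega)
    rw [hCk] at e1
    have e2 := hc q (p a) (p (a + 1)) (by
      rw [hd _ (by omega), hg.dist' (by omega) (by omega)]; omega)
    rw [hB (a + 1) (by omega) (by omega)] at e2
    have e3 := hc q (p ((a + 1 + n) / 2 - 1)) (p n) (by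
      rw [hd _ (by omega), hg.dist' (by omega) (by omega)]; omega)
    rw [hB ((a + 1 + n) / 2 - 1) (by omega) (by omega)] at e3
    (clear * - e1 e2 e3 hBC hBD hBA hCD hCA; grind)
  have d1 : T.degree (p (a + 1)) = 2 := by
    apply deg_two hg (by omega) (by omega)
    intro q hq hq1 hq2
    have hd : ∀ j, j ≤ n → T.dist q (p j) = (a + 1 - j) + (j - (a + 1)) + 1 := fun j hj =>
      pendant_dist hT hg (by omega) (by omega) hq hq1 hq2 hj
    have e1 := hc q (p n) (p a) (by
      rw [hd _ (by omega), hg.dist' (by omega) (by omega)]; omega)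
    have e2 := hc q (p (a + 1)) (p a) (by
      rw [hd _ (by omega), hg.dist' (by omega) (by omega)]; omega)
    rw [hB (a + 1) (by omega) (by omega)] at e2
    have e3 := hc q (p (a / 2 + 1)) (p 0) (by
      rw [hd _ (by omega), hg.dist' (by omega) (by omega)]; omega)
    rw [dbl (a / 2 + 1) (a + 2) (by omega) (by omega) (by omega),
      hB (a + 2) (by omega) (by omega)] at e3
    (clear * - e1 e2 e3 hBC hBD hBA hCD hCA; grind)
  have d2 : T.degree (p (a - 1)) = 2 := by
    apply deg_two hg (by omega) (by omega)
    intro q hq hq1 hq2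
    have hd : ∀ j, j ≤ n → T.dist q (p j) = (a - 1 - j) + (j - (a - 1)) + 1 := fun j hj =>
      pendant_dist hT hg (by omega) (by omega) hq hq1 hq2 hj
    have e1 := hc q (p 0) (p a) (by
      rw [hd _ (by omega), hg.dist' (by omega) (by omega)]; omega)
    have e2 := hc q (p (a - 1)) (p a) (by
      rw [hd _ (by omega), hg.dist' (by omega) (by omega)]; omega)
    rw [hBm] at e2
    by_cases hs : 2 * a = n + 1
    · have e3 := hc (p 0) q (p (2 * a - 2)) (by
        rw [SimpleGraph.dist_comm, hd _ (by omega), hd _ (by omega)]; omega)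
      rw [hB (2 * a - 2) (by omega) (by omega)] at e3
      (clear * - e1 e2 e3 hBC hBD hBA hCD hCA; grind)
    · have e3 := hc (p (2 * a - 2 - n)) q (p n) (by
        rw [SimpleGraph.dist_comm, hd _ (by omega), hd _ (by omega)]; omega)
      rw [dblr (2 * a - 2 - n) (a - 1) (by omega) (by omega), hBm] at e3
      (clear * - e1 e2 e3 hBC hBD hBA hCD hCA; grind)
  refine ⟨d0, ?_⟩
  intro u hu
  rw [SimpleGraph.mem_neighborFinset] at hu
  by_contra hcon
  by_cases h1 : u = p (a - 1)
  · rw [h1] at hcon; exact hcon d2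
  by_cases h1' : u = p (a + 1)
  · rw [h1'] at hcon; exact hcon d1
  classical
  have hsub : ({p (a - 1), p (a + 1), u} : Finset V) ⊆ T.neighborFinset (p a) := by
    intro v hv
    simp only [Finset.mem_insert, Finset.mem_singleton] at hv
    rw [SimpleGraph.mem_neighborFinset]
    rcases hv with rfl | rfl | rfl
    · exact hg.adj (by omega) (by omega) (by omega)
    · exact hg.adj (by omega) (by omega) (by omega)
    · exact hu
  have hcard := Finset.card_le_card hsub
  rw [SimpleGraph.card_neighborFinset_eq_degree, d0, Finset.card_eq_three.2
    ⟨_, _, _, hg.ne (by omega) (by omega) (by omega), Ne.symm h1, Ne.symm h1', rfl⟩] at hcard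
  omega

theorem Geo.shift {p : ℕ → V} {n : ℕ} (hg : Geo T p n) (a : ℕ) (ha : a ≤ n) :
    Geo T (fun i => p (a + i)) (n - a) := by
  intro i j hij hj
  show T.dist (p (a + i)) (p (a + j)) = j - i
  rw [hg (a + i) (a + j) (by omega) (by omega)]
  omega

theorem Geo.rev {p : ℕ → V} {n : ℕ} (hg : Geo T p n) : Geo T (fun i => p (n - i)) n := by
  intro i j hij hj
  show T.dist (p (n - i)) (p (n - j)) = j - i
  rw [hg.dist' (by omega) (by omega)]
  omega

/-- Colours used on the indices between `a` and `b`. -/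
def Col {α : Type*} [DecidableEq α] (c : V → α) (p : ℕ → V) (a b : ℕ) : Finset α :=
  (Finset.Icc a b).image fun i => c (p i)

theorem mem_Col {α : Type*} [DecidableEq α] {c : V → α} {p : ℕ → V} {a b : ℕ} {x : α} :
    x ∈ Col c p a b ↔ ∃ i, a ≤ i ∧ i ≤ b ∧ c (p i) = x := by
  simp [Col, and_assoc]

theorem Col_shift {α : Type*} [DecidableEq α] (c : V → α) (p : ℕ → V) {a n : ℕ} (ha : a ≤ n) :
    Col c (fun i => p (a + i)) 0 (n - a) = Col c p a n := by
  ext x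
  rw [mem_Col, mem_Col]
  constructor
  · rintro ⟨i, h1, h2, h3⟩
    exact ⟨a + i, by omega, by omega, h3⟩
  · rintro ⟨i, h1, h2, h3⟩
    refine ⟨i - a, by omega, by omega, ?_⟩
    rw [← h3]
    show c (p (a + (i - a))) = _
    rw [show a + (i - a) = i by omega]

theorem Col_card_le {α : Type*} [DecidableEq α] (c : V → α) (p : ℕ → V) (a b : ℕ) :
    (Col c p a b).card ≤ b + 1 - a := by
  refine Finset.card_image_le.trans ?_
  rw [Nat.card_Icc]

theorem half {α : Type*} [DecidableEq α] {c : V → α}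
    (hc : NoR T c) {p : ℕ → V} {n m : ℕ} (hg : Geo T p n)
    (hA : ∀ i, 0 < i → i ≤ n → c (p i) ≠ c (p 0)) (hm : 0 < m) (h1 : m ≤ (Col c p 1 n).card) :
    ∃ a, n < 2 * a ∧ a ≤ n ∧ m ≤ (Col c p a n).card ∧
      ∀ i, a < i → i ≤ n → c (p i) ≠ c (p a) := by
  have hn : 1 ≤ n := by
    have := Col_card_le c p 1 n
    omega
  obtain ⟨a, ha⟩ : ∃ a, a = Nat.findGreatest (fun a => m ≤ (Col c p a n).card) n := ⟨_, rfl⟩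
  have ha1 : 1 ≤ a := by
    rw [ha]; exact Nat.le_findGreatest hn h1
  have han : a ≤ n := by
    rw [ha]; exact Nat.findGreatest_le n
  have haP : m ≤ (Col c p a n).card := by
    rw [ha]
    exact Nat.findGreatest_spec (P := fun a => m ≤ (Col c p a n).card) hn h1
  have hu : ∀ i, a < i → i ≤ n → c (p i) ≠ c (p a) := by
    intro i hi hin he
    have hsub : Col c p a n ⊆ Col c p (a + 1) n := by
      intro x hx
      rw [mem_Col] at hx ⊢
      obtain ⟨j, hj, hjn, hjx⟩ := hx
      rcases Nat.eq_or_lt_of_le hj with h | h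
      · subst h
        exact ⟨i, hi, hin, by rw [he, hjx]⟩
      · exact ⟨j, h, hjn, hjx⟩
    have hcard := Finset.card_le_card hsub
    have : a + 1 ≤ a := by
      conv_rhs => rw [ha]
      exact Nat.le_findGreatest (by omega) (haP.trans hcard)
    omega
  refine ⟨a, ?_, han, haP, hu⟩
  by_contra hcon
  rcases hg.ap hc (i := 0) (j := a) (k := 2 * a) (by omega) (by omega) (by omega) with h | h | h
  · exact hA a (by omega) han h.symm
  · exact hu (2 * a) (by omega) (by omega) h.symm
  · exact hA (2 * a) (by omega) (by omega) h.symm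

open Classical in
theorem half_count {α : Type*} [Fintype V] [DecidableRel T.Adj] (hT : T.IsTree)
    {c : V → α} (hc : NoR T c) {p : ℕ → V} {n s : ℕ} (hg : Geo T p n)
    (IH : ∀ m, m < n → ∀ (q : ℕ → V) (s : ℕ), Geo T q m → s + 4 ≤ (Col c q 0 m).card →
      2 ^ (s + 1) ≤ (Finset.univ.filter fun v => Bijacent T v ∧ ∃ i ≤ m, q i = v).card)
    (hA : ∀ i, 0 < i → i ≤ n → c (p i) ≠ c (p 0)) (hD : ∀ i, i < n → c (p i) ≠ c (p n))
    (h1 : s + 3 ≤ (Col c p 1 n).card) (h1' : (Col c p 1 n).card < s + 4) :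
    2 ^ s ≤ (Finset.univ.filter fun v => Bijacent T v ∧ ∃ i ≤ n, n < 2 * i ∧ p i = v).card := by
  obtain ⟨a, ha2, han, hac, hC⟩ := half hc hg hA (by omega) h1
  rcases Nat.eq_zero_or_pos s with hs | hs
  · subst hs
    rw [pow_zero, Nat.one_le_iff_ne_zero, ← Nat.pos_iff_ne_zero, Finset.card_pos]
    refine ⟨p a, ?_⟩
    rw [Finset.mem_filter]
    refine ⟨Finset.mem_univ _, ?_, a, han, ha2, rfl⟩
    have h3 : a + 2 ≤ n := by
      have := Col_card_le c p a n
      omega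
    have hsub : Col c p a n ⊆ Col c p 1 n := by
      intro x hx
      rw [mem_Col] at hx ⊢
      obtain ⟨j, hj, hjn, hjx⟩ := hx
      exact ⟨j, by omega, hjn, hjx⟩
    have hcard := Finset.card_le_card hsub
    have hCm : c (p a) ∈ Col c p a n := mem_Col.2 ⟨a, le_rfl, han, rfl⟩
    have hDm : c (p n) ∈ (Col c p a n).erase (c (p a)) :=
      Finset.mem_erase.2 ⟨hC n (by omega) le_rfl, mem_Col.2 ⟨n, han, le_rfl, rfl⟩⟩
    have hone : (((Col c p a n).erase (c (p a))).erase (c (p n))).card ≤ 1 := by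
      rw [Finset.card_erase_of_mem hDm, Finset.card_erase_of_mem hCm]
      omega
    have hin : ∀ i, a < i → i < n →
        c (p i) ∈ ((Col c p a n).erase (c (p a))).erase (c (p n)) := by
      intro i hi hi'
      exact Finset.mem_erase.2 ⟨hD i hi', Finset.mem_erase.2
        ⟨hC i hi hi'.le, mem_Col.2 ⟨i, hi.le, hi'.le, rfl⟩⟩⟩
    exact base_bij hT hc hg hA hD ha2 h3 hC (c (p (a + 1))) (fun i hi hi' =>
      Finset.card_le_one.1 hone _ (hin i hi hi') _ (hin (a + 1) (by omega) (by omega)))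
  · obtain ⟨t, rfl⟩ : ∃ t, s = t + 1 := ⟨s - 1, by omega⟩
    refine (IH (n - a) (by omega) (fun i => p (a + i)) t (hg.shift a han) ?_).trans ?_
    · rw [Col_shift c p han]
      omega
    · apply Finset.card_le_card
      intro v hv
      rw [Finset.mem_filter] at hv ⊢
      obtain ⟨h1, h2, i, hi, hiv⟩ := hv
      exact ⟨h1, h2, a + i, by omega, by omega, hiv⟩

open Classical in
theorem main_count {α : Type*} [Fintype V] [DecidableRel T.Adj] (hT : T.IsTree)
    {c : V → α} (hc : NoR T c) (n : ℕ) : ∀ (p : ℕ → V) (s : ℕ), Geo T p n →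
      s + 4 ≤ (Col c p 0 n).card →
      2 ^ (s + 1) ≤ (Finset.univ.filter fun v => Bijacent T v ∧ ∃ i ≤ n, p i = v).card := by
  induction n using Nat.strong_induction_on with
  | _ n IH =>
  intro p s hg hs
  have hn : 3 ≤ n := by
    have := Col_card_le c p 0 n
    omega
  by_cases hL : s + 4 ≤ (Col c p 1 n).card
  · refine (IH (n - 1) (by omega) (fun i => p (1 + i)) s (hg.shift 1 (by omega)) ?_).trans ?_
    · rw [Col_shift c p (by omega)]
      exact hL
    · apply Finset.card_le_card
      intro v hv
      rw [Finset.mem_filter] at hv ⊢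
      obtain ⟨h1, h2, i, hi, hiv⟩ := hv
      exact ⟨h1, h2, 1 + i, by omega, hiv⟩
  have hR' : Col c (fun i => p (n - i)) 1 n = Col c p 0 (n - 1) := by
    ext x
    rw [mem_Col, mem_Col]
    constructor
    · rintro ⟨i, h1, h2, h3⟩
      exact ⟨n - i, by omega, by omega, h3⟩
    · rintro ⟨i, h1, h2, h3⟩
      refine ⟨n - i, by omega, by omega, ?_⟩
      rw [← h3]
      show c (p (n - (n - i))) = _
      rw [show n - (n - i) = i by omega]
  by_cases hR : s + 4 ≤ (Col c p 0 (n - 1)).card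
  · refine (IH (n - 1) (by omega) p s (fun i j h h' => hg i j h (by omega)) hR).trans ?_
    apply Finset.card_le_card
    intro v hv
    rw [Finset.mem_filter] at hv ⊢
    obtain ⟨h1, h2, i, hi, hiv⟩ := hv
    exact ⟨h1, h2, i, by omega, hiv⟩
  have hA : ∀ i, 0 < i → i ≤ n → c (p i) ≠ c (p 0) := by
    intro i hi hin he
    apply hL
    refine hs.trans (Finset.card_le_card ?_)
    intro x hx
    rw [mem_Col] at hx ⊢
    obtain ⟨j, hj, hjn, hjx⟩ := hx
    rcases Nat.eq_or_lt_of_le hj with h | h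
    · subst h
      exact ⟨i, hi, hin, by rw [he, hjx]⟩
    · exact ⟨j, h, hjn, hjx⟩
  have hD : ∀ i, i < n → c (p i) ≠ c (p n) := by
    intro i hi he
    apply hR
    refine hs.trans (Finset.card_le_card ?_)
    intro x hx
    rw [mem_Col] at hx ⊢
    obtain ⟨j, hj, hjn, hjx⟩ := hx
    rcases Nat.eq_or_lt_of_le hjn with h | h
    · subst h
      exact ⟨i, by omega, by omega, by rw [he, hjx]⟩
    · exact ⟨j, hj, by omega, hjx⟩
  have hL3 : s + 3 ≤ (Col c p 1 n).card := by
    have hsub : Col c p 0 n ⊆ insert (c (p 0)) (Col c p 1 n) := by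
      intro x hx
      rw [mem_Col] at hx
      rw [Finset.mem_insert, mem_Col]
      obtain ⟨j, hj, hjn, hjx⟩ := hx
      rcases Nat.eq_or_lt_of_le hj with h | h
      · subst h; exact Or.inl hjx.symm
      · exact Or.inr ⟨j, h, hjn, hjx⟩
    have h1 := Finset.card_le_card hsub
    have h2 := Finset.card_insert_le (c (p 0)) (Col c p 1 n)
    omega
  have hR3 : s + 3 ≤ (Col c p 0 (n - 1)).card := by
    have hsub : Col c p 0 n ⊆ insert (c (p n)) (Col c p 0 (n - 1)) := by
      intro x hx
      rw [mem_Col] at hx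
      rw [Finset.mem_insert, mem_Col]
      obtain ⟨j, hj, hjn, hjx⟩ := hx
      rcases Nat.eq_or_lt_of_le hjn with h | h
      · subst h; exact Or.inl hjx.symm
      · exact Or.inr ⟨j, hj, by omega, hjx⟩
    have h1 := Finset.card_le_card hsub
    have h2 := Finset.card_insert_le (c (p n)) (Col c p 0 (n - 1))
    omega
  have r1 := half_count hT hc hg IH hA hD hL3 (by omega)
  have r2 := half_count (s := s) hT hc hg.rev IH
    (by
      intro i hi hin
      show c (p (n - i)) ≠ c (p (n - 0))
      rw [Nat.sub_zero]
      exact hD _ (by omega))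
    (by
      intro i hi
      show c (p (n - i)) ≠ c (p (n - n))
      rw [Nat.sub_self]
      exact hA _ (by omega) (by omega))
    (by rw [hR']; exact hR3) (by rw [hR']; omega)
  rw [pow_succ, mul_two]
  refine (Nat.add_le_add r1 r2).trans ?_
  rw [← Finset.card_union_of_disjoint]
  · apply Finset.card_le_card
    intro v hv
    rw [Finset.mem_union, Finset.mem_filter, Finset.mem_filter] at hv
    rw [Finset.mem_filter]
    rcases hv with ⟨h1, h2, i, hi, hi', hiv⟩ | ⟨h1, h2, i, hi, hi', hiv⟩
    · exact ⟨h1, h2, i, hi, hiv⟩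
    · exact ⟨h1, h2, n - i, by omega, hiv⟩
  · rw [Finset.disjoint_left]
    intro v hv hv'
    rw [Finset.mem_filter] at hv hv'
    obtain ⟨-, -, i, hi, hi', hiv⟩ := hv
    obtain ⟨-, -, j, hj, hj', hjv⟩ := hv'
    exact hg.ne (i := i) (j := n - j) hi (by omega) (by omega) (hiv.trans hjv.symm)

end Helpers

theorem stmt_8 {V : Type*} [Fintype V] (T : SimpleGraph V) [DecidableRel T.Adj]
    (hT : T.IsTree) (ℓ : ℕ) (hℓ : {v : V | Bijacent T v}.ncard = ℓ) (h1 : 1 ≤ ℓ) :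
    (aw T 3 : ℝ) ≤ Real.logb 2 ℓ + 4 := by
  classical
  have key : aw T 3 ≤ Nat.log 2 ℓ + 4 := by
    apply Nat.sInf_le
    refine ⟨by omega, ?_⟩
    intro c hsurj
    by_contra hno
    have hc := noR_of hT c hno
    obtain ⟨p, n, hg, hp⟩ := exists_rainbow_path hT c hc
    have hcol : Col c p 0 n = Finset.univ := by
      rw [Finset.eq_univ_iff_forall]
      intro x
      obtain ⟨v, rfl⟩ := hsurj x
      obtain ⟨i, hi, hiv⟩ := hp v
      exact mem_Col.2 ⟨i, by omega, hi, hiv⟩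
    have hcard : (Col c p 0 n).card = Nat.log 2 ℓ + 4 := by
      rw [hcol]
      exact Finset.card_univ.trans (Fintype.card_fin _)
    have hm := main_count hT hc n p (Nat.log 2 ℓ) hg (by
      refine le_trans hcard.ge (le_of_eq ?_)
      congr!)
    have hle : (Finset.univ.filter fun v => Bijacent T v ∧ ∃ i ≤ n, p i = v).card ≤ ℓ := by
      rw [← hℓ, ← Set.ncard_coe_finset]
      apply Set.ncard_le_ncard
      · intro v hv
        simp only [Finset.coe_filter, Finset.mem_univ, true_and, Set.mem_ofPred_eq] at hv
        exact hv.1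
      · exact Set.toFinite _
    have hlt := Nat.lt_pow_succ_log_self (b := 2) (by norm_num) ℓ
    have hm' : 2 ^ (Nat.log 2 ℓ + 1) ≤ ℓ := le_trans hm (by convert hle)
    exact absurd hm' (not_le.2 hlt)
  have h2 : ((Nat.log 2 ℓ : ℕ) : ℝ) ≤ Real.logb 2 ℓ := Real.natLog_le_logb ℓ 2
  calc (aw T 3 : ℝ) ≤ ((Nat.log 2 ℓ + 4 : ℕ) : ℝ) := by exact_mod_cast key
    _ = (Nat.log 2 ℓ : ℝ) + 4 := by push_cast; rfl
    _ ≤ _ := by linarith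

end AntiVDW
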